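/- arXiv:2108.03295 — 2 statements merged into one kernel-verified Lean document; each statement's English description precedes it below -/
import Mathlib

section
/- Let P be a partially ordered set with a greatest element ⊤ and let a ∈ P. Then a is a non-generator if and only if both: (i) a ≤ p for every p ∈ P that is maximal below ⊤, and (ii) for every chain C ⊆ P that is unbounded below ⊤ and every c ∈ C, there exists r ∈ P with r < ⊤, a ≤ r and c ≤ r. -/
def NonGenerator {P : Type*} [PartialOrder P] [OrderTop P] (a : P) : Prop :=
  ∀ e : P, (¬ ∃ p : P, p < ⊤ ∧ a ≤ p ∧ e ≤ p) → e = ⊤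

def MaximalBelowTop {P : Type*} [PartialOrder P] [OrderTop P] (p : P) : Prop :=
  p < ⊤ ∧ ¬ ∃ q : P, p < q ∧ q < ⊤

/-- A nonempty chain all of whose elements are `< ⊤`, with no bound below `⊤`. -/
def UnboundedBelowTopChain {P : Type*} [PartialOrder P] [OrderTop P] (C : Set P) : Prop :=
  C.Nonempty ∧ IsChain (· ≤ ·) C ∧ (∀ c ∈ C, c < ⊤) ∧
    ¬ ∃ p : P, p < ⊤ ∧ ∀ c ∈ C, c ≤ p

/-!
By Zorn's lemma, every element `e < ⊤` either lies under an element maximal below `⊤` or belongs to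
a chain unbounded below `⊤`. Conditions (i) and (ii) bound `a` and `e` jointly below `⊤` in these
two cases.
-/

theorem exists_le_maximal_of_forall_isChain_mem {α : Type*} [Preorder α] {s : Set α} {x : α}
    (hx : x ∈ s)
    (bounded : ∀ C ⊆ s, IsChain (· ≤ ·) C → x ∈ C → ∃ b ∈ s, ∀ c ∈ C, c ≤ b) :
    ∃ m, x ≤ m ∧ Maximal (· ∈ s) m := by
  obtain ⟨m, ⟨hms, hxm⟩, hm⟩ := zorn_le₀ (s ∩ Set.Ici x) fun C hCs hC ↦ by
    have hxC : IsChain (· ≤ ·) (insert x C) := hC.insert fun c hc _ ↦ .inl (hCs hc).2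
    have hxCs : insert x C ⊆ s := Set.insert_subset hx fun c hc ↦ (hCs hc).1
    obtain ⟨b, hbs, hb⟩ := bounded (insert x C) hxCs hxC (Set.mem_insert x C)
    exact ⟨b, ⟨hbs, hb x (Set.mem_insert x C)⟩, fun c hc ↦ hb c (Set.mem_insert_of_mem x hc)⟩
  exact ⟨m, hxm, hms, fun y hy hmy ↦ hm ⟨hy, hxm.trans hmy⟩ hmy⟩

section

variable {P : Type*} [PartialOrder P] [OrderTop P]

theorem nonGenerator_iff_forall_lt_top {a : P} :
    NonGenerator a ↔ ∀ e : P, e < ⊤ → ∃ r : P, r < ⊤ ∧ a ≤ r ∧ e ≤ r := by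
  simp only [NonGenerator, lt_top_iff_ne_top, not_imp_comm, ne_eq]

theorem maximalBelowTop_iff_maximal {p : P} : MaximalBelowTop p ↔ Maximal (· < ⊤) p := by
  simp only [MaximalBelowTop, maximal_iff_forall_gt, not_exists, not_and]

theorem NonGenerator.le_of_maximalBelowTop {a p : P} (ha : NonGenerator a)
    (hp : MaximalBelowTop p) : a ≤ p := by
  obtain ⟨r, hr, har, hpr⟩ := nonGenerator_iff_forall_lt_top.mp ha p hp.1
  exact har.trans ((maximalBelowTop_iff_maximal.mp hp).le_of_ge hr hpr)

theorem exists_le_maximalBelowTop_or_mem_unboundedBelowTopChain {e : P} (he : e < ⊤) :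
    (∃ m, e ≤ m ∧ MaximalBelowTop m) ∨ ∃ C, UnboundedBelowTopChain C ∧ e ∈ C := by
  refine or_iff_not_imp_right.mpr fun no_chain ↦ ?_
  simp only [maximalBelowTop_iff_maximal]
  refine exists_le_maximal_of_forall_isChain_mem (s := Set.Iio ⊤) he fun C hCtop hC heC ↦ ?_
  by_contra unbounded
  exact no_chain ⟨C, ⟨⟨e, heC⟩, hC, hCtop, unbounded⟩, heC⟩

end

theorem stmt_6 {P : Type*} [PartialOrder P] [OrderTop P] (a : P) :
    NonGenerator a ↔
      (∀ p : P, MaximalBelowTop p → a ≤ p) ∧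
      (∀ C : Set P, UnboundedBelowTopChain C → ∀ c ∈ C,
        ∃ r : P, r < ⊤ ∧ a ≤ r ∧ c ≤ r) := by
  constructor
  · intro ha
    exact ⟨fun p hp ↦ ha.le_of_maximalBelowTop hp,
      fun C hC c hc ↦ nonGenerator_iff_forall_lt_top.mp ha c (hC.2.2.1 c hc)⟩
  · rintro ⟨le_maximal, bounded_with_chain⟩
    refine nonGenerator_iff_forall_lt_top.mpr fun e he ↦ ?_
    obtain ⟨m, hem, hm⟩ | ⟨C, hC, heC⟩ :=
      exists_le_maximalBelowTop_or_mem_unboundedBelowTopChain he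
    · exact ⟨m, hm.1, le_maximal m hm, hem⟩
    · exact bounded_with_chain C hC e heC
end

section
/- Let P be a partially ordered set with a greatest element ⊤ and let a ∈ P be ⊤-compact, that is: whenever C ⊆ P is a nonempty chain such that there is no p ∈ P with p < ⊤ bounding every element of C from above, then a ≤ c for some c ∈ C. Then a is a non-generator if and only if a ≤ p for every p ∈ P that is maximal below ⊤. -/
/-!
The relation `a ∨ e = ⊤` is `Codisjoint a e`. A coatom not above `a` is codisjoint from `a`, so
a non-generator lies below every coatom. Conversely, suppose that `a` and `e` are codisjoint and
consider a chain in `Set.Ici e` avoiding `⊤`. None of its elements is above `a`, so by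
`⊤`-compactness of `a` the chain has an upper bound different from `⊤`. Zorn's lemma then makes
`Set.Ici e` coatomic, and if `e ≠ ⊤`, a coatom above `e` cannot be above `a`.
-/

section

variable {P : Type*} [PartialOrder P] [OrderTop P] {a e p : P}

theorem maximalBelowTop_iff_isCoatom : MaximalBelowTop p ↔ IsCoatom p := by
  simp only [MaximalBelowTop, IsCoatom, lt_top_iff_ne_top, not_exists, not_and, not_not]

theorem codisjoint_iff_not_exists_lt_top :
    Codisjoint a e ↔ ¬ ∃ p : P, p < ⊤ ∧ a ≤ p ∧ e ≤ p := by
  simp only [Codisjoint, top_le_iff, lt_top_iff_ne_top, not_exists, not_and', not_not, and_imp,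
    ne_eq]

theorem nonGenerator_iff_forall_codisjoint :
    NonGenerator a ↔ ∀ e : P, Codisjoint a e → e = ⊤ := by
  simp only [NonGenerator, codisjoint_iff_not_exists_lt_top]

-- Mathlib's `IsCoatom.not_le_iff_codisjoint` needs binary suprema.
theorem not_le_iff_codisjoint_of_isCoatom (hp : IsCoatom p) : ¬ a ≤ p ↔ Codisjoint a p := by
  refine ⟨fun hap q haq hpq => ?_, fun hcod hap => hp.ne_top (top_le_iff.mp (hcod hap le_rfl))⟩
  have hq : p ≠ q := fun h => hap (h ▸ haq)
  exact (hp.lt_iff.mp (hpq.lt_of_ne hq)).ge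

theorem NonGenerator.le_of_isCoatom (ha : NonGenerator a) (hp : IsCoatom p) : a ≤ p := by
  by_contra hap
  exact hp.ne_top <| nonGenerator_iff_forall_codisjoint.mp ha p <|
    (not_le_iff_codisjoint_of_isCoatom hp).mp hap

/-- An element `a` is `⊤`-compact if every nonempty chain whose only possible upper bound is `⊤`
has an element above `a`. This is the hypothesis that lets Zorn's lemma produce coatoms. -/
def IsTopCompact (a : P) : Prop :=
  ∀ C : Set P, C.Nonempty → IsChain (· ≤ ·) C →
    (¬ ∃ p < ⊤, p ∈ upperBounds C) → ∃ c ∈ C, a ≤ c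

namespace IsTopCompact

theorem isCoatomic_Ici (ha : IsTopCompact a) (hae : Codisjoint a e) :
    IsCoatomic (Set.Ici e) := by
  refine .of_isChain_bounded fun C hC hne htop => ?_
  by_contra hunbounded
  have hunbounded_val : ¬ ∃ p < ⊤, p ∈ upperBounds (Subtype.val '' C) := by
    rintro ⟨p, hp, hub⟩
    obtain ⟨c, hc⟩ := hne
    have hep : e ≤ p := c.2.trans (hub ⟨c, hc, rfl⟩)
    exact hunbounded ⟨⟨p, hep⟩, fun h => hp.ne (congrArg Subtype.val h),
      fun d hd => hub ⟨d, hd, rfl⟩⟩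
  obtain ⟨_, ⟨c, hc, rfl⟩, hac⟩ :=
    ha _ (hne.image _) ((Subtype.mono_coe _).isChain_image hC) hunbounded_val
  have hc_top : c = ⊤ := top_le_iff.mp (hae hac c.2)
  exact htop (hc_top ▸ hc)

theorem exists_isCoatom_ge (ha : IsTopCompact a) (hae : Codisjoint a e) (he : e ≠ ⊤) :
    ∃ m, IsCoatom m ∧ e ≤ m := by
  have := ha.isCoatomic_Ici hae
  obtain h | ⟨m, hm, -⟩ := eq_top_or_exists_le_coatom (⟨e, le_rfl⟩ : Set.Ici e)
  · exact absurd (congrArg Subtype.val h) he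
  · exact ⟨m, hm.of_isCoatom_coe_Ici, m.2⟩

theorem nonGenerator_of_forall_isCoatom_le (ha : IsTopCompact a)
    (hle : ∀ p, IsCoatom p → a ≤ p) : NonGenerator a := by
  refine nonGenerator_iff_forall_codisjoint.mpr fun e hae => ?_
  by_contra he
  obtain ⟨m, hm, hem⟩ := ha.exists_isCoatom_ge hae he
  exact (not_le_iff_codisjoint_of_isCoatom hm).mpr (hae.mono_right hem) (hle m hm)

end IsTopCompact

end

theorem stmt_8 {P : Type*} [PartialOrder P] [OrderTop P] (a : P)
    (hcompact : ∀ C : Set P, C.Nonempty → IsChain (· ≤ ·) C →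
      (¬ ∃ p : P, p < ⊤ ∧ ∀ c ∈ C, c ≤ p) → ∃ c ∈ C, a ≤ c) :
    NonGenerator a ↔ ∀ p : P, MaximalBelowTop p → a ≤ p := by
  have ha : IsTopCompact a := hcompact
  simp only [maximalBelowTop_iff_isCoatom]
  exact ⟨fun h _ => h.le_of_isCoatom, ha.nonGenerator_of_forall_isCoatom_le⟩
end
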